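/- (Boltzmann's H theorem, equality case.) Let f : ℝ³ → ℝ be continuous, strictly positive and rapidly decaying, with ln f of polynomial growth. If ∫_{ℝ³} C(f)(v) ln f(v) dv = 0, then f(v')f(v*') = f(v)f(v*) for all v, v* ∈ ℝ³ and all unit vectors ω, and consequently C(f)(v) = 0 for every v ∈ ℝ³. -/

import Mathlib

/-!
The proof symmetrizes the entropy production. Write
`D = (f(v')f(v*') − f(v)f(v*)) |(v−v*)·ω|` on `S² × (ℝ³ × ℝ³)`. Since
`1 + |v|, 1 + |v*| ≤ (1 + |v'|)(1 + |v*'|)`, rapid decay of `f` gives rapid decay of both products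
in `(v, v*)`, so `D · ln f(v)` is integrable (`integrable_entropyDensity`) and Fubini identifies its
integral with `∫ C(f) ln f`.

The exchange `(v, v*) ↦ (v*, v)` and, for each fixed `ω`, the collision map
`(v, v*) ↦ (v', v*')` are linear involutions of `ℝ³ × ℝ³`, hence preserve Lebesgue measure. The
exchange fixes `D` and the collision map changes its sign. Averaging over the group these two
generate, `4 ∫ C(f) ln f` equals the integral of
`−|(v−v*)·ω| (a − b)(ln a − ln b)` with `a = f(v')f(v*')`, `b = f(v)f(v*)`.
The integrand is continuous and nonpositive and the measure charges every nonempty open set, so a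
zero integral forces the integrand to vanish everywhere. Hence `a = b` whenever
`(v−v*)·ω ≠ 0`; otherwise `v' = v` and `v*' = v*`, and `a = b` trivially.
-/

open MeasureTheory
open scoped RealInnerProductSpace

noncomputable section

/-- The post-collision velocity `v' = v − ((v−v*)·ω)ω`. -/
def vPost (v vs ω : EuclideanSpace ℝ (Fin 3)) : EuclideanSpace ℝ (Fin 3) :=
  v - ⟪v - vs, ω⟫ • ω

/-- The post-collision velocity `v*' = v* + ((v−v*)·ω)ω`. -/
def vsPost (v vs ω : EuclideanSpace ℝ (Fin 3)) : EuclideanSpace ℝ (Fin 3) :=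
  vs + ⟪v - vs, ω⟫ • ω

/-- The surface measure on the unit sphere `S² ⊂ ℝ³`. -/
def sphereMeasure : Measure (Metric.sphere (0 : EuclideanSpace ℝ (Fin 3)) 1) :=
  (volume : Measure (EuclideanSpace ℝ (Fin 3))).toSphere

/-- The (dimensionless, hard-sphere) Boltzmann collision integral
`C(f)(v) = ∫_{ℝ³}∫_{S²} (f(v')f(v*') − f(v)f(v*)) |(v−v*)·ω| dω dv*`. -/
def collisionIntegral (f : EuclideanSpace ℝ (Fin 3) → ℝ)
    (v : EuclideanSpace ℝ (Fin 3)) : ℝ :=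
  ∫ vs, (∫ ω : Metric.sphere (0 : EuclideanSpace ℝ (Fin 3)) 1,
    (f (vPost v vs ω) * f (vsPost v vs ω) - f v * f vs) *
      |⟪v - vs, (ω : EuclideanSpace ℝ (Fin 3))⟫| ∂sphereMeasure)

/-- A function on `ℝ³` is rapidly decaying if `sup_v (1+|v|)^k f(v) < ∞` for every `k ∈ ℕ`. -/
def RapidlyDecaying (f : EuclideanSpace ℝ (Fin 3) → ℝ) : Prop :=
  ∀ k : ℕ, ∃ C : ℝ, ∀ v, (1 + ‖v‖) ^ k * f v ≤ C

/-- `ln f` has polynomial growth: `|ln f(v)| ≤ C(1+|v|)^m` for some constants `C, m`. -/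
def LogPolyGrowth (f : EuclideanSpace ℝ (Fin 3) → ℝ) : Prop :=
  ∃ (C : ℝ) (m : ℕ), ∀ v, |Real.log (f v)| ≤ C * (1 + ‖v‖) ^ m

/-! ### The collision map -/

lemma vPost_vPost (v vs ω : EuclideanSpace ℝ (Fin 3)) (hω : ‖ω‖ = 1) :
    vPost (vPost v vs ω) (vsPost v vs ω) ω = v := by
  have h1 : ⟪ω, ω⟫ = (1 : ℝ) := by rw [real_inner_self_eq_norm_sq, hω]; norm_num
  simp only [vPost, vsPost, inner_sub_left, inner_add_left, inner_smul_left, h1]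
  simp only [conj_trivial]
  module

lemma vsPost_vPost (v vs ω : EuclideanSpace ℝ (Fin 3)) (hω : ‖ω‖ = 1) :
    vsPost (vPost v vs ω) (vsPost v vs ω) ω = vs := by
  have h1 : ⟪ω, ω⟫ = (1 : ℝ) := by rw [real_inner_self_eq_norm_sq, hω]; norm_num
  simp only [vPost, vsPost, inner_sub_left, inner_add_left, inner_smul_left, h1]
  simp only [conj_trivial]
  module

lemma vPost_swap (v vs ω : EuclideanSpace ℝ (Fin 3)) : vPost vs v ω = vsPost v vs ω := by
  simp only [vPost, vsPost, inner_sub_left]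
  module

lemma vsPost_swap (v vs ω : EuclideanSpace ℝ (Fin 3)) : vsPost vs v ω = vPost v vs ω := by
  simp only [vPost, vsPost, inner_sub_left]
  module

/-- A collision reverses the normal component of the relative velocity. -/
lemma inner_post (v vs ω : EuclideanSpace ℝ (Fin 3)) (hω : ‖ω‖ = 1) :
    ⟪vPost v vs ω - vsPost v vs ω, ω⟫ = -⟪v - vs, ω⟫ := by
  have h1 : ⟪ω, ω⟫ = (1 : ℝ) := by rw [real_inner_self_eq_norm_sq, hω]; norm_num
  simp only [vPost, vsPost, inner_sub_left, inner_add_left, inner_smul_left, h1]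
  simp only [conj_trivial]
  ring

/-- Conservation of kinetic energy. -/
lemma energy_post (v vs ω : EuclideanSpace ℝ (Fin 3)) (hω : ‖ω‖ = 1) :
    ‖vPost v vs ω‖ ^ 2 + ‖vsPost v vs ω‖ ^ 2 = ‖v‖ ^ 2 + ‖vs‖ ^ 2 := by
  simp only [vPost, vsPost, norm_sub_sq_real, norm_add_sq_real, norm_smul, inner_smul_right, hω,
    inner_sub_left, Real.norm_eq_abs, mul_one, sq_abs]
  ring

/-- The collision map `(v, v*) ↦ (v', v*')` for fixed `ω`, as a linear map. -/
def collisionLin (ω : EuclideanSpace ℝ (Fin 3)) :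
    (EuclideanSpace ℝ (Fin 3) × EuclideanSpace ℝ (Fin 3)) →ₗ[ℝ]
      (EuclideanSpace ℝ (Fin 3) × EuclideanSpace ℝ (Fin 3)) where
  toFun p := (vPost p.1 p.2 ω, vsPost p.1 p.2 ω)
  map_add' p q := by
    ext1
    · simp only [vPost, Prod.fst_add, Prod.snd_add, inner_sub_left, inner_add_left]
      module
    · simp only [vsPost, Prod.fst_add, Prod.snd_add, inner_sub_left, inner_add_left]
      module
  map_smul' c p := by
    ext1
    · simp only [vPost, Prod.smul_fst, Prod.smul_snd, inner_sub_left, real_inner_smul_left,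
        RingHom.id_apply]
      module
    · simp only [vsPost, Prod.smul_fst, Prod.smul_snd, inner_sub_left, real_inner_smul_left,
        RingHom.id_apply]
      module

/-- An involution has determinant `±1`, so the collision map preserves Lebesgue measure. -/
lemma map_collisionLin (ω : EuclideanSpace ℝ (Fin 3)) (hω : ‖ω‖ = 1) :
    Measure.map (collisionLin ω) (volume : Measure
      (EuclideanSpace ℝ (Fin 3) × EuclideanSpace ℝ (Fin 3))) = volume := by
  have hinv : collisionLin ω ∘ₗ collisionLin ω = LinearMap.id := by
    refine LinearMap.ext fun p => Prod.ext ?_ ?_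
    · exact vPost_vPost p.1 p.2 ω hω
    · exact vsPost_vPost p.1 p.2 ω hω
  have hdet : LinearMap.det (collisionLin ω) * LinearMap.det (collisionLin ω) = 1 := by
    rw [← LinearMap.det_comp, hinv, LinearMap.det_id]
  have hne : LinearMap.det (collisionLin ω) ≠ 0 := by
    intro h0
    rw [h0] at hdet
    norm_num at hdet
  have habs : |LinearMap.det (collisionLin ω)| = 1 := by
    rcases mul_self_eq_one_iff.1 hdet with h1 | h1 <;> rw [h1] <;> norm_num
  have : (volume : Measure
      (EuclideanSpace ℝ (Fin 3) × EuclideanSpace ℝ (Fin 3))).IsAddHaarMeasure :=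
    inferInstanceAs (Measure.IsAddHaarMeasure (Measure.prod volume volume))
  rw [Measure.map_linearMap_addHaar_eq_smul_addHaar _ hne, abs_inv, habs]
  simp

/-! ### The phase space of collisions and its symmetries -/

/-- The space of collisions `(ω, (v, v*))`; `ω` comes first so that the collision map is a skew
product over the sphere. -/
abbrev Collisions : Type :=
  Metric.sphere (0 : EuclideanSpace ℝ (Fin 3)) 1 ×
    (EuclideanSpace ℝ (Fin 3) × EuclideanSpace ℝ (Fin 3))

/-- The measure `dω dv dv*` on the space of collisions. -/
def collisionMeasure : Measure Collisions :=
  sphereMeasure.prod (Measure.prod volume volume)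

instance : IsFiniteMeasure sphereMeasure :=
  inferInstanceAs (IsFiniteMeasure (volume : Measure (EuclideanSpace ℝ (Fin 3))).toSphere)

instance : Measure.IsOpenPosMeasure sphereMeasure :=
  inferInstanceAs
    (Measure.IsOpenPosMeasure (volume : Measure (EuclideanSpace ℝ (Fin 3))).toSphere)

instance : Measure.IsOpenPosMeasure collisionMeasure :=
  inferInstanceAs
    (Measure.IsOpenPosMeasure (sphereMeasure.prod (Measure.prod volume volume)))

/-- The collision involution `(ω, v, v*) ↦ (ω, v', v*')`. -/
def collide (x : Collisions) : Collisions :=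
  (x.1, (vPost x.2.1 x.2.2 x.1, vsPost x.2.1 x.2.2 x.1))

/-- The exchange of particles `(ω, v, v*) ↦ (ω, v*, v)`. -/
def exchange (x : Collisions) : Collisions := (x.1, (x.2.2, x.2.1))

lemma continuous_collide : Continuous collide := by
  unfold collide vPost vsPost
  fun_prop

lemma continuous_exchange : Continuous exchange := by
  unfold exchange
  fun_prop

lemma measurePreserving_collide :
    MeasurePreserving collide collisionMeasure collisionMeasure := by
  refine (MeasurePreserving.id sphereMeasure).skew_product
    (g := fun ω p => collisionLin ω p) ?_ (Filter.Eventually.of_forall fun ω => ?_)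
  · exact (continuous_snd.comp continuous_collide).measurable
  · exact map_collisionLin ω (by simp)

lemma measurePreserving_exchange :
    MeasurePreserving exchange collisionMeasure collisionMeasure :=
  (MeasurePreserving.id sphereMeasure).prod Measure.measurePreserving_swap

/-! ### The entropy production density -/

/-- The integrand `(f(v')f(v*') − f(v)f(v*)) |(v−v*)·ω|` of the collision integral. -/
def collisionDensity (f : EuclideanSpace ℝ (Fin 3) → ℝ) (x : Collisions) : ℝ :=
  (f (vPost x.2.1 x.2.2 x.1) * f (vsPost x.2.1 x.2.2 x.1) - f x.2.1 * f x.2.2) *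
    |⟪x.2.1 - x.2.2, (x.1 : EuclideanSpace ℝ (Fin 3))⟫|

/-- The integrand of `∫ C(f) ln f dv` on the space of collisions. -/
def entropyDensity (f : EuclideanSpace ℝ (Fin 3) → ℝ) (x : Collisions) : ℝ :=
  collisionDensity f x * Real.log (f x.2.1)

lemma norm_sphere (ω : Metric.sphere (0 : EuclideanSpace ℝ (Fin 3)) 1) :
    ‖(ω : EuclideanSpace ℝ (Fin 3))‖ = 1 := by simp

lemma collisionDensity_collide (f : EuclideanSpace ℝ (Fin 3) → ℝ) (x : Collisions) :
    collisionDensity f (collide x) = -collisionDensity f x := by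
  simp only [collisionDensity, collide, vPost_vPost _ _ _ (norm_sphere x.1),
    vsPost_vPost _ _ _ (norm_sphere x.1), inner_post _ _ _ (norm_sphere x.1), abs_neg]
  ring

lemma collisionDensity_exchange (f : EuclideanSpace ℝ (Fin 3) → ℝ) (x : Collisions) :
    collisionDensity f (exchange x) = collisionDensity f x := by
  simp only [collisionDensity, exchange]
  rw [vPost_swap x.2.1 x.2.2, vsPost_swap x.2.1 x.2.2, ← neg_sub x.2.1 x.2.2, inner_neg_left, abs_neg]
  ring

lemma continuous_entropyDensity {f : EuclideanSpace ℝ (Fin 3) → ℝ} (hf : Continuous f)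
    (hpos : ∀ v, 0 < f v) : Continuous (entropyDensity f) := by
  have hlog : Continuous fun v => Real.log (f v) := hf.log fun v => (hpos v).ne'
  have hlog' : Continuous fun x : Collisions => Real.log (f x.2.1) := hlog.comp (by fun_prop)
  refine Continuous.mul ?_ hlog'
  unfold collisionDensity vPost vsPost
  fun_prop

lemma one_add_le_of_sq_le {w a b : ℝ} (ha : 0 ≤ a) (hb : 0 ≤ b)
    (h : w ^ 2 ≤ a ^ 2 + b ^ 2) : 1 + w ≤ (1 + a) * (1 + b) := by
  have hab : 0 ≤ a * b := mul_nonneg ha hb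
  have : w ≤ a + b := abs_le_of_sq_le_sq' (by nlinarith) (by linarith) |>.2
  nlinarith

/-- If the kinetic energy of `(a, b)` is that of `(v, v*)`, then `f(a) f(b)` decays rapidly in
`(v, v*)`. -/
lemma product_decay {f : EuclideanSpace ℝ (Fin 3) → ℝ} (hpos : ∀ v, 0 < f v) {k : ℕ} {C : ℝ}
    (hC : ∀ v, (1 + ‖v‖) ^ (2 * k) * f v ≤ C) {v vs a b : EuclideanSpace ℝ (Fin 3)}
    (hE : ‖a‖ ^ 2 + ‖b‖ ^ 2 = ‖v‖ ^ 2 + ‖vs‖ ^ 2) :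
    ((1 + ‖v‖) * (1 + ‖vs‖)) ^ k * (f a * f b) ≤ C ^ 2 := by
  have hv : 1 + ‖v‖ ≤ (1 + ‖a‖) * (1 + ‖b‖) :=
    one_add_le_of_sq_le (norm_nonneg _) (norm_nonneg _)
      (by nlinarith [sq_nonneg ‖vs‖])
  have hvs : 1 + ‖vs‖ ≤ (1 + ‖a‖) * (1 + ‖b‖) :=
    one_add_le_of_sq_le (norm_nonneg _) (norm_nonneg _)
      (by nlinarith [sq_nonneg ‖v‖])
  have hfa := hpos a
  have hfb := hpos b
  calc ((1 + ‖v‖) * (1 + ‖vs‖)) ^ k * (f a * f b)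
      ≤ (((1 + ‖a‖) * (1 + ‖b‖)) * ((1 + ‖a‖) * (1 + ‖b‖))) ^ k * (f a * f b) := by gcongr
    _ = ((1 + ‖a‖) ^ (2 * k) * f a) * ((1 + ‖b‖) ^ (2 * k) * f b) := by
        simp only [pow_mul, mul_pow, sq]
        ring
    _ ≤ C * C := mul_le_mul (hC a) (hC b) (by positivity) (le_trans (by positivity) (hC a))
    _ = C ^ 2 := (sq C).symm

lemma integrable_weight :
    Integrable (fun x : Collisions => (1 + ‖x.2.1‖) ^ (-4 : ℝ) * (1 + ‖x.2.2‖) ^ (-4 : ℝ))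
      collisionMeasure := by
  have h1 : Integrable (fun v : EuclideanSpace ℝ (Fin 3) => (1 + ‖v‖) ^ (-4 : ℝ)) volume :=
    integrable_one_add_norm (by simp; norm_num)
  exact (h1.mul_prod h1).comp_snd sphereMeasure

lemma integrable_entropyDensity {f : EuclideanSpace ℝ (Fin 3) → ℝ} (hf : Continuous f)
    (hpos : ∀ v, 0 < f v) (hdec : RapidlyDecaying f) (hlog : LogPolyGrowth f) :
    Integrable (entropyDensity f) collisionMeasure := by
  obtain ⟨L, m, hL⟩ := hlog
  -- One power absorbs `|v − v*|`, `m` powers absorb `ln f(v)`, four make the weight integrable.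
  obtain ⟨C, hC⟩ := hdec (2 * (m + 5))
  have hL0 : 0 ≤ L := by
    have := (abs_nonneg _).trans (hL 0)
    simpa using this
  refine (integrable_weight.const_mul (2 * C ^ 2 * L)).mono'
    (continuous_entropyDensity hf hpos).aestronglyMeasurable
    (Filter.Eventually.of_forall fun x => ?_)
  obtain ⟨ω, v, vs⟩ := x
  have hω := norm_sphere ω
  set P := (1 + ‖v‖) * (1 + ‖vs‖) with hP
  have hP1 : 0 < P := by positivity
  have ha := product_decay hpos hC (energy_post v vs ω hω)
  have hb := product_decay hpos hC (rfl : ‖v‖ ^ 2 + ‖vs‖ ^ 2 = ‖v‖ ^ 2 + ‖vs‖ ^ 2)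
  rw [← hP] at ha hb
  have hdiff : P ^ (m + 5) *
      |f (vPost v vs ω) * f (vsPost v vs ω) - f v * f vs| ≤ 2 * C ^ 2 := by
    have h1 : |f (vPost v vs ω) * f (vsPost v vs ω) - f v * f vs| ≤
        f (vPost v vs ω) * f (vsPost v vs ω) + f v * f vs := by
      refine (abs_sub _ _).trans (le_of_eq ?_)
      rw [abs_of_pos (mul_pos (hpos _) (hpos _)), abs_of_pos (mul_pos (hpos _) (hpos _))]
    calc _ ≤ P ^ (m + 5) * (f (vPost v vs ω) * f (vsPost v vs ω) + f v * f vs) := by gcongr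
      _ ≤ 2 * C ^ 2 := by rw [mul_add]; linarith
  have hin : |⟪v - vs, (ω : EuclideanSpace ℝ (Fin 3))⟫| ≤ P := by
    refine (abs_real_inner_le_norm _ _).trans ?_
    rw [hω, mul_one, hP]
    refine (norm_sub_le v vs).trans ?_
    nlinarith [norm_nonneg v, norm_nonneg vs, mul_nonneg (norm_nonneg v) (norm_nonneg vs)]
  have hlg : |Real.log (f v)| ≤ L * P ^ m := by
    refine (hL v).trans ?_
    gcongr
    rw [hP]
    nlinarith [norm_nonneg v, norm_nonneg vs, mul_nonneg (norm_nonneg v) (norm_nonneg vs)]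
  have hweight : (1 + ‖v‖) ^ (-4 : ℝ) * (1 + ‖vs‖) ^ (-4 : ℝ) = (P ^ 4)⁻¹ := by
    rw [← Real.mul_rpow (by positivity) (by positivity), Real.rpow_neg hP1.le]
    norm_cast
  simp only [entropyDensity, collisionDensity]
  rw [hweight, ← div_eq_mul_inv, le_div_iff₀ (by positivity), Real.norm_eq_abs, abs_mul, abs_mul,
    abs_abs]
  calc _ ≤ |f (vPost v vs ω) * f (vsPost v vs ω) - f v * f vs| * P * (L * P ^ m) * P ^ 4 := by
        gcongr
    _ = (P ^ (m + 5) * |f (vPost v vs ω) * f (vsPost v vs ω) - f v * f vs|) * L := by ring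
    _ ≤ 2 * C ^ 2 * L := by gcongr

lemma integral_entropyDensity {f : EuclideanSpace ℝ (Fin 3) → ℝ}
    (hint : Integrable (entropyDensity f) collisionMeasure) :
    ∫ x, entropyDensity f x ∂collisionMeasure =
      ∫ v, collisionIntegral f v * Real.log (f v) := by
  unfold collisionMeasure at hint ⊢
  rw [integral_prod_symm _ hint, integral_prod _ hint.integral_prod_right]
  refine integral_congr_ae (Filter.Eventually.of_forall fun v => ?_)
  simp only [collisionIntegral, entropyDensity, collisionDensity, integral_mul_const]

/-! ### Symmetrization -/

/-- The entropy density summed over the symmetries generated by `exchange` and `collide`, with the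
sign chosen so that the result is nonnegative. -/
def symmetrizedDensity (f : EuclideanSpace ℝ (Fin 3) → ℝ) (x : Collisions) : ℝ :=
  -(entropyDensity f x + entropyDensity f (exchange x) + entropyDensity f (collide x) +
    entropyDensity f (exchange (collide x)))

lemma symmetrizedDensity_eq {f : EuclideanSpace ℝ (Fin 3) → ℝ} (hpos : ∀ v, 0 < f v)
    (x : Collisions) :
    symmetrizedDensity f x =
      |⟪x.2.1 - x.2.2, (x.1 : EuclideanSpace ℝ (Fin 3))⟫| *
        ((f (vPost x.2.1 x.2.2 x.1) * f (vsPost x.2.1 x.2.2 x.1) - f x.2.1 * f x.2.2) *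
          (Real.log (f (vPost x.2.1 x.2.2 x.1) * f (vsPost x.2.1 x.2.2 x.1)) -
            Real.log (f x.2.1 * f x.2.2))) := by
  rw [Real.log_mul (hpos _).ne' (hpos _).ne', Real.log_mul (hpos _).ne' (hpos _).ne']
  simp only [symmetrizedDensity, entropyDensity, collisionDensity_exchange,
    collisionDensity_collide]
  simp only [collisionDensity, exchange, collide]
  ring

/-- Both factors have the same sign, as `Real.log` is increasing. -/
lemma sub_mul_log_sub_nonneg {a b : ℝ} (ha : 0 < a) (hb : 0 < b) :
    0 ≤ (a - b) * (Real.log a - Real.log b) := by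
  rcases le_total a b with hab | hab
  · exact mul_nonneg_of_nonpos_of_nonpos (sub_nonpos.2 hab)
      (sub_nonpos.2 (Real.log_le_log ha hab))
  · exact mul_nonneg (sub_nonneg.2 hab) (sub_nonneg.2 (Real.log_le_log hb hab))

lemma symmetrizedDensity_eq_zero {f : EuclideanSpace ℝ (Fin 3) → ℝ} (hf : Continuous f)
    (hpos : ∀ v, 0 < f v) (hdec : RapidlyDecaying f) (hlog : LogPolyGrowth f)
    (h : (∫ v, collisionIntegral f v * Real.log (f v)) = 0) (x : Collisions) :
    symmetrizedDensity f x = 0 := by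
  have hc := continuous_entropyDensity hf hpos
  have hint := integrable_entropyDensity hf hpos hdec hlog
  have hzero : ∫ x, entropyDensity f x ∂collisionMeasure = 0 :=
    (integral_entropyDensity hint).trans h
  have key : ∀ T : Collisions → Collisions, MeasurePreserving T collisionMeasure collisionMeasure →
      Integrable (fun x => entropyDensity f (T x)) collisionMeasure ∧
        ∫ x, entropyDensity f (T x) ∂collisionMeasure = 0 := by
    intro T hT
    refine ⟨hT.integrable_comp_of_integrable hint, ?_⟩
    rw [← integral_map hT.aemeasurable hc.aestronglyMeasurable, hT.map_eq, hzero]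
  obtain ⟨i1, z1⟩ := key exchange measurePreserving_exchange
  obtain ⟨i2, z2⟩ := key collide measurePreserving_collide
  obtain ⟨i3, z3⟩ := key (fun x => exchange (collide x))
    (measurePreserving_exchange.comp measurePreserving_collide)
  have hsint : Integrable (symmetrizedDensity f) collisionMeasure :=
    (((hint.add i1).add i2).add i3).neg
  have i12 : Integrable (fun x => entropyDensity f x + entropyDensity f (exchange x))
      collisionMeasure := hint.add i1
  have i123 : Integrable (fun x => entropyDensity f x + entropyDensity f (exchange x) +
      entropyDensity f (collide x)) collisionMeasure := i12.add i2
  have hs0 : ∫ x, symmetrizedDensity f x ∂collisionMeasure = 0 := by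
    unfold symmetrizedDensity
    rw [integral_neg, integral_add i123 i3, integral_add i12 i2,
      integral_add hint i1, hzero, z1, z2, z3]
    norm_num
  have hnonneg : 0 ≤ symmetrizedDensity f := fun y => by
    rw [symmetrizedDensity_eq hpos]
    exact mul_nonneg (abs_nonneg _)
      (sub_mul_log_sub_nonneg (mul_pos (hpos _) (hpos _)) (mul_pos (hpos _) (hpos _)))
  have hsc : Continuous (symmetrizedDensity f) :=
    (((hc.add (hc.comp continuous_exchange)).add (hc.comp continuous_collide)).add
      (hc.comp (continuous_exchange.comp continuous_collide))).neg
  exact congrFun (Measure.eq_of_ae_eq ((integral_eq_zero_iff_of_nonneg hnonneg hsint).1 hs0) hsc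
    continuous_zero) x

/-- **Boltzmann's H theorem (equality case).** For `f` continuous, strictly positive and
rapidly decaying with `ln f` of polynomial growth, if `∫ C(f) ln f dv = 0` then
`f(v')f(v*') = f(v)f(v*)` for all `v, v*` and all unit vectors `ω`, and consequently
`C(f)(v) = 0` for every `v`. -/
theorem H_theorem_equality_case (f : EuclideanSpace ℝ (Fin 3) → ℝ)
    (hf_cont : Continuous f) (hf_pos : ∀ v, 0 < f v)
    (hf_dec : RapidlyDecaying f) (hf_log : LogPolyGrowth f)
    (h : (∫ v, collisionIntegral f v * Real.log (f v)) = 0) :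
    (∀ v vs ω : EuclideanSpace ℝ (Fin 3), ‖ω‖ = 1 →
      f (vPost v vs ω) * f (vsPost v vs ω) = f v * f vs) ∧
    (∀ v : EuclideanSpace ℝ (Fin 3), collisionIntegral f v = 0) := by
  have hmain : ∀ v vs ω : EuclideanSpace ℝ (Fin 3), ‖ω‖ = 1 →
      f (vPost v vs ω) * f (vsPost v vs ω) = f v * f vs := by
    intro v vs ω hω
    by_cases h0 : ⟪v - vs, ω⟫ = 0
    · simp [vPost, vsPost, h0]
    have hs := symmetrizedDensity_eq_zero hf_cont hf_pos hf_dec hf_log h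
      (⟨ω, by simpa using hω⟩, (v, vs))
    rw [symmetrizedDensity_eq hf_pos] at hs
    rcases mul_eq_zero.1 hs with h1 | h1
    · exact absurd (abs_eq_zero.1 h1) h0
    rcases mul_eq_zero.1 h1 with h2 | h2
    · exact sub_eq_zero.1 h2
    · exact Real.log_injOn_pos (mul_pos (hf_pos _) (hf_pos _)) (mul_pos (hf_pos _) (hf_pos _))
        (sub_eq_zero.1 h2)
  refine ⟨hmain, fun v => ?_⟩
  simp [collisionIntegral, hmain v _ _ (norm_sphere _)]

end
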